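/- arXiv:1703.08435 — 5 statements merged into one kernel-verified Lean document; each statement's English description precedes it below -/
import Mathlib

section
/- Let κ be a finite measure on ℝ, let m ≥ 1 be an integer, and let ψ_1,…,ψ_m, φ_1,…,φ_m : ℝ → ℝ be bounded measurable functions. Then ∫_{ℝ^m} det(ψ_i(x_j))_{i,j=1}^m · det(φ_i(x_j))_{i,j=1}^m dκ(x_1)⋯dκ(x_m) = m! · det( ∫_ℝ ψ_i(x) φ_j(x) dκ(x) )_{i,j=1}^m. -/
open MeasureTheory

/-!
Expanding only the second determinant over permutations and absorbing its factors into the columns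
of the first gives `det A * det B = ∑ τ, sign τ * det (A i j * B (τ j) j)`. Each summand is a
determinant whose `j`-th column depends on `x j` alone, so by Fubini the integral moves inside
it; the result is the matrix of pairwise integrals with its columns permuted by `τ`. The two signs
cancel, and the `m!` permutations contribute equally.
-/

variable {ι 𝕜 : Type*} [Fintype ι] [DecidableEq ι]

theorem det_mul_det_eq_sum_sign_mul_det {R : Type*} [CommRing R] (A B : Matrix ι ι R) :
    A.det * B.det =
      ∑ τ : Equiv.Perm ι,
        (Equiv.Perm.sign τ : R) * (Matrix.of fun i j => A i j * B (τ j) j).det := by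
  simp_rw [mul_comm (A _ _), Matrix.det_mul_row]
  rw [Matrix.det_apply' B, Finset.mul_sum]
  exact Finset.sum_congr rfl fun τ _ => by ring

section IndependentColumns

variable {E : ι → Type*} {mE : ∀ j, MeasurableSpace (E j)} {μ : ∀ j, Measure (E j)}
  [∀ j, SigmaFinite (μ j)]

theorem integrable_sign_mul_prod_pi [NormedCommRing 𝕜] {f : ι → ∀ j, E j → 𝕜}
    (hf : ∀ i j, Integrable (f i j) (μ j)) (σ : Equiv.Perm ι) :
    Integrable (fun x : ∀ j, E j => (Equiv.Perm.sign σ : 𝕜) * ∏ j, f (σ j) j (x j))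
      (Measure.pi μ) :=
  (Integrable.fintype_prod_dep fun j => hf (σ j) j).const_mul _

theorem integrable_det_pi [NormedCommRing 𝕜] {f : ι → ∀ j, E j → 𝕜}
    (hf : ∀ i j, Integrable (f i j) (μ j)) :
    Integrable (fun x : ∀ j, E j => (Matrix.of fun i j => f i j (x j)).det) (Measure.pi μ) := by
  simp only [Matrix.det_apply', Matrix.of_apply]
  exact integrable_finsetSum _ fun σ _ => integrable_sign_mul_prod_pi hf σ

theorem integral_det_pi [RCLike 𝕜] {f : ι → ∀ j, E j → 𝕜}
    (hf : ∀ i j, Integrable (f i j) (μ j)) :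
    ∫ x : ∀ j, E j, (Matrix.of fun i j => f i j (x j)).det ∂Measure.pi μ =
      (Matrix.of fun i j => ∫ y, f i j y ∂μ j).det := by
  simp only [Matrix.det_apply', Matrix.of_apply]
  rw [integral_finsetSum _ fun σ _ => integrable_sign_mul_prod_pi hf σ]
  refine Finset.sum_congr rfl fun σ _ => ?_
  rw [integral_const_mul, integral_fintype_prod_eq_prod fun j => f (σ j) j]

end IndependentColumns

theorem sum_sign_mul_det_submatrix_id {R : Type*} [CommRing R] (M : Matrix ι ι R) :
    ∑ τ : Equiv.Perm ι, (Equiv.Perm.sign τ : R) * (M.submatrix id τ).det =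
      (Fintype.card ι).factorial * M.det := by
  have sign_mul_det (τ : Equiv.Perm ι) :
      (Equiv.Perm.sign τ : R) * (M.submatrix id τ).det = M.det := by
    rw [Matrix.det_permute', ← mul_assoc, ← Int.cast_mul, ← Units.val_mul, Int.units_mul_self,
      Units.val_one, Int.cast_one, one_mul]
  simp_rw [sign_mul_det]
  rw [Finset.sum_const, Finset.card_univ, Fintype.card_perm, nsmul_eq_mul]

theorem integral_cauchy_binet_general [RCLike 𝕜] {E : Type*} [MeasurableSpace E]
    (κ : Measure E) [SigmaFinite κ] (ψ φ : ι → E → 𝕜)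
    (hψφ : ∀ i j, Integrable (fun y => ψ i y * φ j y) κ) :
    ∫ x : ι → E, (Matrix.of fun i j => ψ i (x j)).det * (Matrix.of fun i j => φ i (x j)).det
        ∂(Measure.pi fun _ => κ) =
      (Fintype.card ι).factorial * (Matrix.of fun i j => ∫ y, ψ i y * φ j y ∂κ).det := by
  let G : Matrix ι ι 𝕜 := Matrix.of fun i j => ∫ y, ψ i y * φ j y ∂κ
  calc
    _ = ∫ x : ι → E, ∑ τ : Equiv.Perm ι, (Equiv.Perm.sign τ : 𝕜) *
          (Matrix.of fun i j => ψ i (x j) * φ (τ j) (x j)).det ∂(Measure.pi fun _ => κ) := by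
      simp only [det_mul_det_eq_sum_sign_mul_det, Matrix.of_apply]
    _ = ∑ τ : Equiv.Perm ι, (Equiv.Perm.sign τ : 𝕜) *
          ∫ x : ι → E, (Matrix.of fun i j => ψ i (x j) * φ (τ j) (x j)).det
            ∂(Measure.pi fun _ => κ) := by
      rw [integral_finsetSum _ fun τ _ =>
        (integrable_det_pi fun i j => hψφ i (τ j)).const_mul _]
      simp_rw [integral_const_mul]
    _ = ∑ τ : Equiv.Perm ι, (Equiv.Perm.sign τ : 𝕜) * (G.submatrix id τ).det :=
      Finset.sum_congr rfl fun τ _ =>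
        congrArg _ (integral_det_pi fun i j => hψφ i (τ j))
    _ = (Fintype.card ι).factorial * G.det := sum_sign_mul_det_submatrix_id G

theorem integrable_mul_of_bounded {E R : Type*} [MeasurableSpace E] [NormedRing R]
    {μ : Measure E} [IsFiniteMeasure μ] {f g : E → R}
    (hf : AEStronglyMeasurable f μ) (hg : AEStronglyMeasurable g μ)
    (hfb : ∃ C, ∀ x, ‖f x‖ ≤ C) (hgb : ∃ C, ∀ x, ‖g x‖ ≤ C) :
    Integrable (fun x => f x * g x) μ := by
  obtain ⟨C, hC⟩ := hfb
  obtain ⟨D, hD⟩ := hgb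
  exact (Integrable.of_bound hg D (ae_of_all μ hD)).bdd_mul hf (ae_of_all μ hC)

/-- Integral Cauchy–Binet (Andréief) formula: for a finite measure `κ` on `ℝ` and bounded
measurable functions `ψ i, φ i : ℝ → ℝ`, `i = 1, …, m`, the `m`-fold integral of the product of
the two determinants `det(ψ i (x j))` and `det(φ i (x j))` with respect to the product measure
equals `m!` times the determinant of the matrix of pairwise integrals `∫ ψ i · φ j dκ`. -/
theorem integral_cauchy_binet (m : ℕ) (hm : 1 ≤ m)
    (κ : Measure ℝ) [IsFiniteMeasure κ]
    (ψ φ : Fin m → ℝ → ℝ)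
    (hψmeas : ∀ i, Measurable (ψ i)) (hφmeas : ∀ i, Measurable (φ i))
    (hψbdd : ∀ i, ∃ C : ℝ, ∀ x : ℝ, |ψ i x| ≤ C)
    (hφbdd : ∀ i, ∃ C : ℝ, ∀ x : ℝ, |φ i x| ≤ C) :
    ∫ x : Fin m → ℝ,
        (Matrix.of fun i j : Fin m => ψ i (x j)).det *
          (Matrix.of fun i j : Fin m => φ i (x j)).det
        ∂(Measure.pi fun _ : Fin m => κ)
      = (Nat.factorial m : ℝ) *
        (Matrix.of fun i j : Fin m => ∫ x : ℝ, ψ i x * φ j x ∂κ).det := by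
  simpa only [Fintype.card_fin] using integral_cauchy_binet_general κ ψ φ fun i j =>
    integrable_mul_of_bounded (hψmeas i).aestronglyMeasurable (hφmeas j).aestronglyMeasurable
      (hψbdd i) (hφbdd j)
end

section
/- Let m > n ≥ 1 be integers and r, s > −1 be real numbers. For each N ∈ ℕ let p_N : ℝ → ℝ be a polynomial such that ∫_0^1 x^j p_N(x) x^r (1−x)^s dx = 0 for every integer 0 ≤ j < N. Fix 0 ≤ k ≤ n−1 and let α = (n−k, 1^k, 0^{m−k−1}) be the hook partition with α_1 = n−k, α_2 = ⋯ = α_{k+1} = 1 and α_i = 0 for i > k+1. Then for any partition τ = (τ_1 ≥ τ_2 ≥ ⋯ ≥ τ_m ≥ 0) of nonnegative integers such that τ_i > α_i for some 1 ≤ i ≤ m, the determinant det( ∫_0^1 x^{α_j + m − j} p_{τ_i + m − i}(x) x^r (1−x)^s dx )_{i,j=1}^m equals 0. -/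
open MeasureTheory

/-! The rows `i ≤ i₀` of the matrix, where `τ i₀ > α i₀`, have polynomial degrees
`τ i + m - i ≥ τ i₀ + m - i₀`, while the columns `j ≥ i₀` have exponents
`α j + m - j ≤ α i₀ + m - i₀`. Orthogonality kills every entry in this corner, and a block of
zeros with `i₀` rows and `m - i₀ + 1` columns forces the determinant to vanish
(Frobenius–König). -/

section ZeroBlock

open Finset

variable {ι R : Type*}

theorem exists_mem_apply_mem_of_card_lt {κ : Type*} [Fintype κ] (f : ι ↪ κ)
    {s : Finset κ} {t : Finset ι} (hst : Fintype.card κ < #s + #t) : ∃ j ∈ t, f j ∈ s := by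
  classical
  have hcard : #(univ : Finset κ) < #s + #(t.map f) := by
    rwa [card_map, card_univ]
  obtain ⟨i, hi⟩ :=
    inter_nonempty_of_card_lt_card_add_card (subset_univ s) (subset_univ _) hcard
  obtain ⟨his, hit⟩ := mem_inter.1 hi
  obtain ⟨j, hj, rfl⟩ := mem_map.1 hit
  exact ⟨j, hj, his⟩

variable [Fintype ι]

theorem card_lt_card_le_add_card_ge [LinearOrder ι] (i : ι) :
    Fintype.card ι < #{l | l ≤ i} + #{j | i ≤ j} := by
  have hunion : ({l | l ≤ i} : Finset ι) ∪ ({j | i ≤ j} : Finset ι) = univ := by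
    ext l
    simpa using le_total l i
  have hinter : (({l | l ≤ i} : Finset ι) ∩ ({j | i ≤ j} : Finset ι)).Nonempty := ⟨i, by simp⟩
  rw [← card_union_add_card_inter, hunion, card_univ]
  exact Nat.lt_add_of_pos_right hinter.card_pos

variable [CommRing R]

theorem det_eq_zero_of_zero_block [DecidableEq ι] {M : Matrix ι ι R} {s t : Finset ι}
    (hst : Fintype.card ι < #s + #t) (hM : ∀ i ∈ s, ∀ j ∈ t, M i j = 0) : M.det = 0 := by
  rw [Matrix.det_apply]
  refine sum_eq_zero fun σ _ => ?_
  obtain ⟨j, hjt, hjs⟩ := exists_mem_apply_mem_of_card_lt σ.toEmbedding hst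
  have hprod : ∏ i, M (σ i) i = 0 := prod_eq_zero (mem_univ j) (hM _ hjs j hjt)
  rw [hprod, smul_zero]

theorem det_eq_zero_of_zero_corner [LinearOrder ι] {M : Matrix ι ι R} (i₀ : ι)
    (hM : ∀ i ≤ i₀, ∀ j ≥ i₀, M i j = 0) : M.det = 0 :=
  det_eq_zero_of_zero_block (card_lt_card_le_add_card_ge i₀) fun i hi j hj =>
    hM i (by simpa using hi) j (by simpa using hj)

theorem det_eq_zero_of_antitone_of_exists_lt [LinearOrder ι] {κ : Type*} [Preorder κ]
    {c : κ → κ → R} (hc : ∀ b a, a < b → c a b = 0) {a b : ι → κ} (ha : Antitone a)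
    (hb : Antitone b) (hab : ∃ i, a i < b i) :
    (Matrix.of fun i j => c (a j) (b i)).det = 0 := by
  obtain ⟨i₀, hi₀⟩ := hab
  refine det_eq_zero_of_zero_corner i₀ fun i hi j hj => hc _ _ ?_
  calc
    a j ≤ a i₀ := ha hj
    _ < b i₀ := hi₀
    _ ≤ b i := hb hi

end ZeroBlock

theorem antitone_add_staircase {m : ℕ} {a : Fin m → ℕ} (ha : Antitone a) :
    Antitone fun i : Fin m => a i + (m - 1 - i.val) :=
  fun _ _ hij => Nat.add_le_add (ha hij) (Nat.sub_le_sub_left hij _)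

/-- The parts of the hook partition `(n - k, 1^k)`, indexed from `0` and padded with zeros;
meaningful for `k < n`, where `n - k` is not truncated. -/
def hookPart (n k i : ℕ) : ℕ :=
  if i = 0 then n - k else if i ≤ k then 1 else 0

theorem antitone_hookPart {n k : ℕ} (hk : k < n) : Antitone (hookPart n k) := by
  intro i j hij
  unfold hookPart
  split_ifs <;> omega

/-- The array `c a N` abstracts the moments `∫ x ^ a * p_N x * w x` of a family `p_N` orthogonal
to lower powers. -/
theorem det_vanishes_unless_subset_hook_general {R : Type*} [CommRing R] {m : ℕ}
    {c : ℕ → ℕ → R} (horth : ∀ N a : ℕ, a < N → c a N = 0) {α τ : Fin m → ℕ}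
    (hα : Antitone α) (hτ : Antitone τ) (hnotsub : ∃ i, α i < τ i) :
    (Matrix.of fun i j : Fin m =>
      c (α j + (m - 1 - j.val)) (τ i + (m - 1 - i.val))).det = 0 :=
  det_eq_zero_of_antitone_of_exists_lt horth (antitone_add_staircase hα)
    (antitone_add_staircase hτ) (hnotsub.imp fun _ hi => Nat.add_lt_add_right hi _)

/-- Let `m > n ≥ 1`, `r, s > -1`, and for each `N` let `p N` be a polynomial orthogonal to all
monomials `x ^ j`, `j < N`, with respect to the weight `x ^ r * (1 - x) ^ s` on `(0,1)`.
Let `α = (n - k, 1^k, 0^{m-k-1})` be a hook partition (`0 ≤ k ≤ n - 1`).  Then for any partition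
`τ = (τ_1 ≥ ⋯ ≥ τ_m ≥ 0)` such that `τ_i > α_i` for some `i`, the determinant
`det(∫_0^1 x^{α_j + m - j} p_{τ_i + m - i}(x) x^r (1-x)^s dx)` vanishes.
Indices `i, j : Fin m` correspond to `i + 1, j + 1 ∈ {1, …, m}`, so `m - j` reads
`m - 1 - j.val`. -/
theorem det_vanishes_unless_subset_hook (m n : ℕ) (hn : 1 ≤ n) (hmn : n < m)
    (r s : ℝ) (hr : -1 < r) (hs : -1 < s)
    (p : ℕ → Polynomial ℝ)
    (horth : ∀ N : ℕ, ∀ j : ℕ, j < N →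
      ∫ x in (0:ℝ)..1, (x ^ j * (p N).eval x) * (x ^ r * (1 - x) ^ s) = 0)
    (k : ℕ) (hk : k ≤ n - 1)
    (α : Fin m → ℕ)
    (hα : ∀ i : Fin m, α i = if i.val = 0 then n - k else if i.val ≤ k then 1 else 0)
    (τ : Fin m → ℕ) (hτ : Antitone τ)
    (hnotsub : ∃ i : Fin m, α i < τ i) :
    (Matrix.of fun i j : Fin m =>
        ∫ x in (0:ℝ)..1,
          (x ^ (α j + (m - 1 - j.val)) * (p (τ i + (m - 1 - i.val))).eval x) *
            (x ^ r * (1 - x) ^ s)).det = 0 := by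
  have hα_anti : Antitone α := fun i j hij => by
    simpa only [hα, hookPart] using antitone_hookPart (by omega : k < n) (Fin.val_le_of_le hij)
  exact det_vanishes_unless_subset_hook_general
    (c := fun a N => ∫ x in (0:ℝ)..1, (x ^ a * (p N).eval x) * (x ^ r * (1 - x) ^ s))
    horth hα_anti hτ hnotsub
end

section
/- Let m > n ≥ 1 be integers and r, s > −1 be real numbers. For each N ∈ ℕ let p_N : ℝ → ℝ be a polynomial such that ∫_0^1 x^j p_N(x) x^r (1−x)^s dx = 0 for every integer 0 ≤ j < N. Fix 0 ≤ k ≤ n−1 and let α = (n−k, 1^k, 0^{m−k−1}) be the hook partition. Then for any partition τ = (τ_1 ≥ ⋯ ≥ τ_m ≥ 0) such that τ_i > α_i for some 1 ≤ i ≤ m, the multiple integral ∫_{[0,1]^m} det(λ_j^{α_i + m − i})_{i,j=1}^m · det( p_{τ_i + m − i}(λ_j) )_{i,j=1}^m · ∏_{i=1}^m λ_i^r (1−λ_i)^s dλ_1 ⋯ dλ_m equals 0. -/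
open MeasureTheory

/-!
Absorb the weight into the second determinant. Andréief's identity turns the multiple integral into
`m!` times the determinant of the matrix of one-dimensional pairings of `λ ^ (α_i + m - i)` with
`p_{τ_j + m - j}`. If `τ_l > α_l`, then for `j ≤ l ≤ i` the monotonicity of `α` and `τ` gives
`α_i + m - i ≤ α_l + m - l < τ_l + m - l ≤ τ_j + m - j`, so that pairing vanishes by orthogonality.
These pairs `(i, j)` form a zero block with `m - l + 1` rows and `l` columns; as the two counts add
up to more than `m`, the determinant is zero.
-/

section Determinant

variable {ι R : Type*} [Fintype ι] [DecidableEq ι] [CommRing R]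

theorem det_mul_det_eq_sum_sum (A B : Matrix ι ι R) :
    A.det * B.det = ∑ σ : Equiv.Perm ι, ∑ π : Equiv.Perm ι,
      (σ.sign : R) * (π.sign : R) * ∏ j, A (σ j) j * B (π j) j := by
  rw [Matrix.det_apply', Matrix.det_apply', Finset.sum_mul_sum]
  simp only [Finset.prod_mul_distrib, mul_mul_mul_comm]

theorem sum_sum_sign_mul_prod_eq_factorial_smul_det (A : Matrix ι ι R) :
    ∑ σ : Equiv.Perm ι, ∑ π : Equiv.Perm ι,
      (σ.sign : R) * (π.sign : R) * ∏ j, A (σ j) (π j) =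
        (Fintype.card ι).factorial • A.det := by
  have inner_sum (σ : Equiv.Perm ι) :
      ∑ π : Equiv.Perm ι, (σ.sign : R) * (π.sign : R) * ∏ j, A (σ j) (π j) = A.det :=
    calc
      _ = (σ.sign : R) * (A.submatrix σ id).transpose.det := by
        simp only [Matrix.det_apply', Matrix.transpose_apply, Matrix.submatrix_apply, id,
          Finset.mul_sum, mul_assoc]
      _ = A.det := by
        rw [Matrix.det_transpose, Matrix.det_permute, ← mul_assoc, ← Int.cast_mul,
          Int.units_coe_mul_self, Int.cast_one, one_mul]
  simp only [inner_sum, Finset.sum_const, Finset.card_univ, Fintype.card_perm]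

theorem det_eq_zero_of_zero_block_s2 (A : Matrix ι ι R) {s t : Finset ι}
    (hcard : Fintype.card ι < s.card + t.card) (hA : ∀ i ∈ s, ∀ j ∈ t, A i j = 0) :
    A.det = 0 := by
  rw [Matrix.det_apply']
  refine Finset.sum_eq_zero fun σ _ => ?_
  have not_disjoint : ¬ Disjoint s (t.map σ.toEmbedding) := fun hdisj => by
    have := Finset.card_le_univ (s.disjUnion (t.map σ.toEmbedding) hdisj)
    rw [Finset.card_disjUnion, Finset.card_map] at this
    exact this.not_gt hcard
  obtain ⟨i, hi, hit⟩ := Finset.not_disjoint_iff.mp not_disjoint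
  obtain ⟨j, hj, hji⟩ := Finset.mem_map.mp hit
  have entry_eq_zero : A (σ j) j = 0 := hA _ (hji ▸ hi) j hj
  have prod_eq_zero : ∏ j, A (σ j) j = 0 := Finset.prod_eq_zero (Finset.mem_univ j) entry_eq_zero
  rw [prod_eq_zero, mul_zero]

end Determinant

theorem integral_det_mul_det_eq_factorial_smul_det {ι X 𝕜 : Type*} [Fintype ι]
    [DecidableEq ι] [MeasurableSpace X] {μ : Measure X} [SigmaFinite μ] [RCLike 𝕜]
    {f g : ι → X → 𝕜} (hfg : ∀ i j, Integrable (fun x => f i x * g j x) μ) :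
    ∫ x : ι → X, (Matrix.of fun i j => f i (x j)).det * (Matrix.of fun i j => g i (x j)).det
        ∂(Measure.pi fun _ => μ) =
      (Fintype.card ι).factorial • (Matrix.of fun i j => ∫ x, f i x * g j x ∂μ).det := by
  have term_integrable (σ π : Equiv.Perm ι) :
      Integrable (fun x : ι → X =>
          (σ.sign : 𝕜) * (π.sign : 𝕜) * ∏ j, f (σ j) (x j) * g (π j) (x j))
        (Measure.pi fun _ => μ) :=
    (Integrable.fintype_prod fun j => hfg (σ j) (π j)).const_mul _
  have term_integral (σ π : Equiv.Perm ι) :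
      ∫ x : ι → X, (σ.sign : 𝕜) * (π.sign : 𝕜) * ∏ j, f (σ j) (x j) * g (π j) (x j)
          ∂(Measure.pi fun _ => μ) =
        (σ.sign : 𝕜) * (π.sign : 𝕜) * ∏ j, ∫ x, f (σ j) x * g (π j) x ∂μ := by
    rw [integral_const_mul,
      integral_fintype_prod_eq_prod (f := fun j x => f (σ j) x * g (π j) x)]
  rw [← sum_sum_sign_mul_prod_eq_factorial_smul_det]
  simp only [det_mul_det_eq_sum_sum, Matrix.of_apply]
  rw [integral_finsetSum _ fun σ _ => integrable_finsetSum _ fun π _ => term_integrable σ π]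
  refine Finset.sum_congr rfl fun σ _ => ?_
  rw [integral_finsetSum _ fun π _ => term_integrable σ π]
  exact Finset.sum_congr rfl fun π _ => term_integral σ π

theorem integrableOn_Ioc_rpow_mul_one_sub_rpow {r s : ℝ} (hr : -1 < r) (hs : -1 < s) :
    IntegrableOn (fun x : ℝ => x ^ r * (1 - x) ^ s) (Set.Ioc 0 1) := by
  have hbeta := Complex.betaIntegral_convergent (u := (r + 1 : ℝ)) (v := (s + 1 : ℝ))
    (by rw [Complex.ofReal_re]; linarith) (by rw [Complex.ofReal_re]; linarith)
  rw [intervalIntegrable_iff_integrableOn_Ioc_of_le zero_le_one] at hbeta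
  refine IntegrableOn.congr_fun hbeta.re (fun x hx => ?_) measurableSet_Ioc
  have hx₀ : 0 ≤ x := hx.1.le
  have hx₁ : 0 ≤ 1 - x := sub_nonneg.mpr hx.2
  have hcast : (x : ℂ) ^ (((r + 1 : ℝ) : ℂ) - 1) * (1 - (x : ℂ)) ^ (((s + 1 : ℝ) : ℂ) - 1) =
      ((x ^ r * (1 - x) ^ s : ℝ) : ℂ) := by
    rw [Complex.ofReal_mul, Complex.ofReal_cpow hx₀, Complex.ofReal_cpow hx₁]
    push_cast
    rw [add_sub_cancel_right, add_sub_cancel_right]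
  exact (congrArg Complex.re hcast).trans (Complex.ofReal_re _)

theorem integrableOn_Ioc_mul_rpow_mul_one_sub_rpow {r s : ℝ} (hr : -1 < r) (hs : -1 < s)
    {f : ℝ → ℝ} (hf : ContinuousOn f (Set.Icc 0 1)) :
    IntegrableOn (fun x => f x * (x ^ r * (1 - x) ^ s)) (Set.Ioc 0 1) :=
  (integrableOn_Ioc_rpow_mul_one_sub_rpow hr hs).continuousOn_mul_of_subset hf isCompact_Icc
    measurableSet_Ioc Set.Ioc_subset_Icc_self

theorem antitone_hook {m a k : ℕ} (ha : 1 ≤ a) :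
    Antitone fun i : Fin m => if i.val = 0 then a else if i.val ≤ k then 1 else 0 := by
  intro i j (hij : i.val ≤ j.val)
  dsimp only
  split_ifs <;> omega

theorem integral_schur_jacobi_vanishes_unless_subset_hook_general {X 𝕜 : Type*}
    [MeasurableSpace X] {μ : Measure X} [SigmaFinite μ] [RCLike 𝕜]
    {m : ℕ} {φ ψ : ℕ → X → 𝕜} {w : X → 𝕜}
    (hint : ∀ c d, Integrable (fun x => φ c x * ψ d x * w x) μ)
    (horth : ∀ d c, c < d → ∫ x, φ c x * ψ d x * w x ∂μ = 0)
    {α τ : Fin m → ℕ} (hα : Antitone α) (hτ : Antitone τ) (hnotsub : ∃ i, α i < τ i) :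
    ∫ x : Fin m → X,
        (Matrix.of fun i j : Fin m => φ (α i + (m - 1 - i.val)) (x j)).det *
          (Matrix.of fun i j : Fin m => ψ (τ i + (m - 1 - i.val)) (x j)).det *
          ∏ i, w (x i)
        ∂(Measure.pi fun _ => μ) = 0 := by
  obtain ⟨l, hl⟩ := hnotsub
  have absorb_weight (x : Fin m → X) :
      (Matrix.of fun i j : Fin m => ψ (τ i + (m - 1 - i.val)) (x j)).det * ∏ i, w (x i) =
        (Matrix.of fun i j : Fin m => ψ (τ i + (m - 1 - i.val)) (x j) * w (x j)).det := by
    simpa only [Matrix.of_apply, mul_comm] using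
      (Matrix.det_mul_row (fun j => w (x j))
        (Matrix.of fun i j : Fin m => ψ (τ i + (m - 1 - i.val)) (x j))).symm
  simp only [mul_assoc] at hint horth
  simp only [mul_assoc, absorb_weight]
  rw [integral_det_mul_det_eq_factorial_smul_det
    (f := fun i : Fin m => φ (α i + (m - 1 - i.val)))
    (g := fun (i : Fin m) x => ψ (τ i + (m - 1 - i.val)) x * w x) fun _ _ => hint _ _,
    det_eq_zero_of_zero_block_s2 (s := Finset.Ici l) (t := Finset.Iic l), smul_zero]
  · rw [Fintype.card_fin, Fin.card_Ici, Fin.card_Iic]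
    omega
  · intro i hi j hj
    have hli : l ≤ i := Finset.mem_Ici.mp hi
    have hjl : j ≤ l := Finset.mem_Iic.mp hj
    have hαi : α i ≤ α l := hα hli
    have hτj : τ l ≤ τ j := hτ hjl
    exact horth _ _ (by omega)

/-- Let `m > n ≥ 1`, `r, s > -1`, and for each `N` let `p N` be a polynomial orthogonal to all
monomials `x ^ j`, `j < N`, with respect to the weight `x ^ r * (1 - x) ^ s` on `(0,1)`.
Let `α = (n - k, 1^k, 0^{m-k-1})` be a hook partition (`0 ≤ k ≤ n - 1`).  Then for any partition
`τ = (τ_1 ≥ ⋯ ≥ τ_m ≥ 0)` with `τ_i > α_i` for some `i`, the multiple integral over `[0,1]^m` of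
`det(λ_j^{α_i + m - i}) · det(p_{τ_i + m - i}(λ_j)) · ∏_i λ_i^r (1 - λ_i)^s` vanishes.
Indices `i, j : Fin m` correspond to `i + 1, j + 1 ∈ {1, …, m}`, so `m - i` reads
`m - 1 - i.val`. -/
theorem integral_schur_jacobi_vanishes_unless_subset_hook (m n : ℕ) (hn : 1 ≤ n) (hmn : n < m)
    (r s : ℝ) (hr : -1 < r) (hs : -1 < s)
    (p : ℕ → Polynomial ℝ)
    (horth : ∀ N : ℕ, ∀ j : ℕ, j < N →
      ∫ x in (0:ℝ)..1, (x ^ j * (p N).eval x) * (x ^ r * (1 - x) ^ s) = 0)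
    (k : ℕ) (hk : k ≤ n - 1)
    (α : Fin m → ℕ)
    (hα : ∀ i : Fin m, α i = if i.val = 0 then n - k else if i.val ≤ k then 1 else 0)
    (τ : Fin m → ℕ) (hτ : Antitone τ)
    (hnotsub : ∃ i : Fin m, α i < τ i) :
    ∫ x : Fin m → ℝ,
        (Matrix.of fun i j : Fin m => x j ^ (α i + (m - 1 - i.val))).det *
          (Matrix.of fun i j : Fin m => (p (τ i + (m - 1 - i.val))).eval (x j)).det *
          ∏ i : Fin m, x i ^ r * (1 - x i) ^ s
        ∂(Measure.pi fun _ : Fin m => volume.restrict (Set.Ioc (0:ℝ) 1)) = 0 :=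
  integral_schur_jacobi_vanishes_unless_subset_hook_general
    (φ := fun c x => x ^ c) (ψ := fun d x => (p d).eval x) (w := fun x => x ^ r * (1 - x) ^ s)
    (fun _ _ => integrableOn_Ioc_mul_rpow_mul_one_sub_rpow hr hs (by fun_prop))
    (fun d c h => (intervalIntegral.integral_of_le zero_le_one).symm.trans (horth d c h))
    (funext hα ▸ antitone_hook (by omega)) hτ hnotsub
end

section
/- Let m ≥ 1 and r ≥ s ≥ 0 be integers and t, d > 0 real numbers. For a partition τ = (τ_1 ≥ ⋯ ≥ τ_m ≥ 0) define K_τ = ∑_{i=1}^m τ_i (τ_i + r + s + 1 + 2(m−i)), Q_τ = ∏_{1≤i<j≤m} (τ_i − τ_j + j − i)(τ_i + τ_j + 2m − i − j + r + s + 1) · ∏_{i=1}^m Γ(τ_i + m − i + r + 1) 2^{−(m−i)} / ( Γ(τ_i + m − i + 1) Γ(m − i + r + 1) Γ(m − i + 1) ), and N_τ = ∏_{i=1}^m (2(τ_i + m − i) + r + s + 1) Γ(τ_i + m − i + 1) Γ(τ_i + m − i + 1 + r + s) / ( Γ(r + τ_i + m − i + 1) Γ(s + τ_i + m − i + 1)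 ). Then the family τ ↦ exp(−K_τ t/d) · Q_τ^2 · N_τ, indexed by all partitions τ with at most m parts, is summable. -/
/-!
Ratios of Gamma values at integers a bounded distance apart are bounded by a power of the larger
integer. Hence `Q_τ` and `N_τ` grow slower than `exp (ε ∑ τ_i)` for every `ε > 0`, whereas
`K_τ ≥ ∑ τ_i`, so the family is dominated by `exp (-c ∑ τ_i)` for some `c > 0`. The sum of
this bound over all multi-indices, decreasing or not, is a finite product of geometric series.
-/

open Asymptotics Finset Real
open scoped NNReal Nat

section Subexponential

variable {α : Type*}

/-- The algebra of real functions of subexponential growth with respect to a weight `w`, i.e. those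
bounded by a constant times `exp (ε * w)` for every `ε > 0`. The bound is required everywhere, not
only eventually, which is what the filter `⊤` expresses. -/
def subexponentialAlgebra (w : α → ℝ≥0) : Subalgebra ℝ (α → ℝ) where
  carrier := {g | ∀ ε : ℝ, 0 < ε → g =O[⊤] fun a => exp (ε * w a)}
  mul_mem' {g h} hg hh ε hε := by
    refine ((hg (ε / 2) (half_pos hε)).mul (hh (ε / 2) (half_pos hε))).congr_right fun a => ?_
    rw [← exp_add, ← add_mul, add_halves]
  add_mem' hg hh ε hε := (hg ε hε).add (hh ε hε)
  algebraMap_mem' c ε hε := isBigO_top.2 ⟨‖c‖, fun a => by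
    rw [Real.norm_of_nonneg (exp_pos _).le]
    exact le_mul_of_one_le_right (norm_nonneg c) (one_le_exp (by positivity))⟩

variable {w : α → ℝ≥0}

lemma mem_subexponentialAlgebra_of_abs_le {g h : α → ℝ} (hh : h ∈ subexponentialAlgebra w)
    (hgh : ∀ a, |g a| ≤ h a) : g ∈ subexponentialAlgebra w := fun ε hε =>
  (IsBigO.of_norm_le hgh).trans (hh ε hε)

lemma const_mem_subexponentialAlgebra (c : ℝ) : (fun _ => c) ∈ subexponentialAlgebra w :=
  (subexponentialAlgebra w).algebraMap_mem c

lemma prod_mem_subexponentialAlgebra {ι : Type*} {S : Finset ι} {g : ι → α → ℝ}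
    (hg : ∀ i ∈ S, g i ∈ subexponentialAlgebra w) :
    (fun a => ∏ i ∈ S, g i a) ∈ subexponentialAlgebra w := by
  simpa only [prod_fn] using prod_mem hg

lemma weight_mem_subexponentialAlgebra : (fun a => (w a : ℝ)) ∈ subexponentialAlgebra w :=
  fun ε hε => isBigO_top.2 ⟨ε⁻¹, fun a => by
    have hexp : ε * w a ≤ exp (ε * w a) := by linarith [add_one_le_exp (ε * w a)]
    rwa [Real.norm_of_nonneg (w a).coe_nonneg, Real.norm_of_nonneg (exp_pos _).le,
      ← div_eq_inv_mul, le_div_iff₀' hε]⟩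

lemma summable_exp_neg_mul_of_mem_subexponentialAlgebra {b c : ℝ} (hbc : b < c)
    (hb : Summable fun a => exp (-(b * w a))) {K : α → ℝ} (hK : ∀ a, c * w a ≤ K a)
    {g : α → ℝ} (hg : g ∈ subexponentialAlgebra w) :
    Summable fun a => exp (-K a) * g a := by
  have hexp : (fun a => exp (-K a)) =O[⊤] fun a => exp (-(c * w a)) :=
    IsBigO.of_norm_le fun a => by
      rw [Real.norm_of_nonneg (exp_pos _).le]
      exact exp_le_exp.2 (neg_le_neg (hK a))
  have hprod : (fun a => exp (-K a) * g a) =O[⊤] fun a => exp (-(b * w a)) :=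
    (hexp.mul (hg (c - b) (sub_pos.2 hbc))).congr_right fun a => by
      rw [← exp_add]
      ring_nf
  exact summable_of_isBigO hb (hprod.mono le_top)

end Subexponential

section GammaRatio

lemma factorial_le_pow_mul_factorial {p q k : ℕ} (h : p ≤ q + k) : p ! ≤ (p + 1) ^ k * q ! := by
  induction k generalizing p with
  | zero => simpa using Nat.factorial_le h
  | succ k ih =>
    cases p with
    | zero => simpa using Nat.one_le_iff_ne_zero.2 q.factorial_ne_zero
    | succ p =>
      calc (p + 1)! = (p + 1) * p ! := Nat.factorial_succ p
        _ ≤ (p + 1) * ((p + 1) ^ k * q !) := Nat.mul_le_mul_left _ (ih (by omega))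
        _ = (p + 1) ^ (k + 1) * q ! := by ring
        _ ≤ (p + 1 + 1) ^ (k + 1) * q ! := by gcongr; omega

lemma Gamma_natCast_div_le_pow {p q k : ℕ} (hp : 0 < p) (hq : 0 < q) (h : p ≤ q + k) :
    Gamma p / Gamma q ≤ (p : ℝ) ^ k := by
  rw [div_le_iff₀ (Gamma_pos_of_pos (Nat.cast_pos.2 hq))]
  obtain ⟨p, rfl⟩ := Nat.exists_eq_add_one.2 hp
  obtain ⟨q, rfl⟩ := Nat.exists_eq_add_one.2 hq
  have hfac : p ! ≤ (p + 1) ^ k * q ! := factorial_le_pow_mul_factorial (by omega)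
  simp only [Nat.cast_succ, Gamma_nat_eq_factorial]
  exact_mod_cast hfac

lemma Gamma_natCast_div_mem_subexponentialAlgebra {α : Type*} {w : α → ℝ≥0} {p q : α → ℕ} (k : ℕ)
    (hp : ∀ a, 0 < p a) (hq : ∀ a, 0 < q a) (h : ∀ a, p a ≤ q a + k)
    (hmem : (fun a => (p a : ℝ)) ∈ subexponentialAlgebra w) :
    (fun a => Gamma (p a) / Gamma (q a)) ∈ subexponentialAlgebra w :=
  mem_subexponentialAlgebra_of_abs_le (pow_mem hmem k) fun a => by
    have hpos (n : ℕ) : 0 ≤ Gamma n := Gamma_nonneg_of_nonneg n.cast_nonneg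
    rw [abs_of_nonneg (div_nonneg (hpos _) (hpos _))]
    exact Gamma_natCast_div_le_pow (hp a) (hq a) (h a)

end GammaRatio

section MultiIndex

lemma summable_pi_prod {ι : Type*} [Fintype ι] {κ : ι → Type*} {u : ∀ i, κ i → ℝ}
    (hu : ∀ i, Summable (u i)) (hu_nonneg : ∀ i k, 0 ≤ u i k) :
    Summable fun f : ∀ i, κ i => ∏ i, u i (f i) := by
  classical
  have hprod_nonneg (f : ∀ i, κ i) : 0 ≤ ∏ i, u i (f i) := prod_nonneg fun i _ => hu_nonneg i _
  refine summable_of_sum_le hprod_nonneg (c := ∏ i, ∑' k, u i k) fun S => ?_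
  have hsub : S ⊆ Fintype.piFinset fun i => S.image (· i) := fun f hf =>
    Fintype.mem_piFinset.2 fun i => mem_image_of_mem (· i) hf
  calc ∑ f ∈ S, ∏ i, u i (f i)
      ≤ ∑ f ∈ Fintype.piFinset fun i => S.image (· i), ∏ i, u i (f i) :=
        sum_le_sum_of_subset_of_nonneg hsub fun f _ _ => hprod_nonneg f
    _ = ∏ i, ∑ k ∈ S.image (· i), u i k := (prod_univ_sum _ _).symm
    _ ≤ ∏ i, ∑' k, u i k :=
        prod_le_prod (fun i _ => sum_nonneg fun k _ => hu_nonneg i k) fun i _ =>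
          (hu i).sum_le_tsum _ fun k _ => hu_nonneg i k

variable {ι : Type*} [Fintype ι]

/-- The degree `∑ i, f i` of a multi-index, with values in `ℝ≥0` so that it can serve as the weight
of a `subexponentialAlgebra`. -/
def multiIndexDegree (f : ι → ℕ) : ℝ≥0 := ∑ i, (f i : ℝ≥0)

lemma summable_exp_neg_mul_multiIndexDegree {c : ℝ} (hc : 0 < c) :
    Summable fun f : ι → ℕ => exp (-(c * multiIndexDegree f)) := by
  have hgeom : Summable fun n : ℕ => exp (n * -c) := summable_exp_nat_mul_iff.2 (neg_lt_zero.2 hc)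
  refine (summable_pi_prod (fun _ : ι => hgeom) fun _ _ => (exp_pos _).le).congr fun f => ?_
  rw [← exp_sum, ← sum_mul]
  simp [multiIndexDegree, mul_comm c]

lemma natCast_mem_subexponentialAlgebra_of_le {p : (ι → ℕ) → ℕ} (k n : ℕ)
    (hp : ∀ f, p f ≤ k * ∑ i, f i + n) :
    (fun f => (p f : ℝ)) ∈ subexponentialAlgebra (multiIndexDegree (ι := ι)) :=
  mem_subexponentialAlgebra_of_abs_le (add_mem (mul_mem (const_mem_subexponentialAlgebra (k : ℝ))
    weight_mem_subexponentialAlgebra) (const_mem_subexponentialAlgebra (n : ℝ))) fun f => by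
    simpa [multiIndexDegree] using mod_cast hp f

end MultiIndex

section Jacobi

variable {m : ℕ}

/-- The number `K_τ`, the decay rate of the `τ`-th term of the series, for an arbitrary multi-index
`τ`. In this definition and the next ones `i : Fin m` stands for the index `i + 1` of the formulas,
so that `m - i` reads `m - 1 - i.val`. -/
def jacobiEigenvalue (r s : ℕ) (τ : Fin m → ℕ) : ℕ :=
  ∑ i, τ i * (τ i + r + s + 1 + 2 * (m - 1 - i.val))

/-- The first product in `Q_τ`, a Vandermonde determinant in the quantities `x_i (x_i + r + s + 1)`
with `x_i = τ_i + m - i`. -/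
noncomputable def jacobiVandermonde (r s : ℕ) (τ : Fin m → ℕ) : ℝ :=
  ∏ i : Fin m, ∏ j ∈ Ioi i,
    (((τ i : ℝ) - (τ j : ℝ) + (j.val : ℝ) - (i.val : ℝ)) *
      ((τ i + τ j + (m - 1 - i.val) + (m - 1 - j.val) + r + s + 1 : ℕ) : ℝ))

/-- The number `Q_τ`, the value at `1^m` of the symmetric Jacobi polynomial when `τ` is a partition;
here for an arbitrary multi-index `τ`. -/
noncomputable def jacobiValueAtOne (r s : ℕ) (τ : Fin m → ℕ) : ℝ :=
  jacobiVandermonde r s τ *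
    ∏ i : Fin m,
      Gamma ((τ i + (m - 1 - i.val) + r + 1 : ℕ)) * ((2 : ℝ) ^ (m - 1 - i.val))⁻¹ /
        (Gamma ((τ i + (m - 1 - i.val) + 1 : ℕ)) * Gamma (((m - 1 - i.val) + r + 1 : ℕ)) *
          Gamma (((m - 1 - i.val) + 1 : ℕ)))

/-- The number `N_τ`, the product of the inverse squared `L²`-norms of the one-dimensional Jacobi
polynomials of degrees `τ_i + m - i`. -/
noncomputable def jacobiInvSqNorm (r s : ℕ) (τ : Fin m → ℕ) : ℝ :=
  ∏ i : Fin m,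
    ((2 * (τ i + (m - 1 - i.val)) + r + s + 1 : ℕ) : ℝ) * Gamma ((τ i + (m - 1 - i.val) + 1 : ℕ)) *
      Gamma ((τ i + (m - 1 - i.val) + 1 + r + s : ℕ)) /
      (Gamma ((r + τ i + (m - 1 - i.val) + 1 : ℕ)) * Gamma ((s + τ i + (m - 1 - i.val) + 1 : ℕ)))

lemma multiIndexDegree_le_jacobiEigenvalue (r s : ℕ) (τ : Fin m → ℕ) :
    (multiIndexDegree τ : ℝ) ≤ jacobiEigenvalue r s τ := by
  have hsum : ∑ i, τ i ≤ jacobiEigenvalue r s τ :=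
    sum_le_sum fun i _ => Nat.le_mul_of_pos_right _ (by omega)
  simpa [multiIndexDegree] using (Nat.cast_le (α := ℝ)).2 hsum

lemma jacobiVandermonde_mem_subexponentialAlgebra (r s : ℕ) :
    jacobiVandermonde r s ∈ subexponentialAlgebra (multiIndexDegree (ι := Fin m)) := by
  have hle (τ : Fin m → ℕ) (i : Fin m) : τ i ≤ ∑ j, τ j :=
    single_le_sum_of_canonicallyOrdered (mem_univ i)
  have hcoord (i : Fin m) :
      (fun τ => (τ i : ℝ)) ∈ subexponentialAlgebra (multiIndexDegree (ι := Fin m)) :=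
    natCast_mem_subexponentialAlgebra_of_le 1 0 fun τ => by simpa using hle τ i
  refine prod_mem_subexponentialAlgebra fun i _ => prod_mem_subexponentialAlgebra fun j _ =>
    mul_mem ?difference ?sum
  case difference =>
    exact sub_mem (add_mem (sub_mem (hcoord i) (hcoord j)) (const_mem_subexponentialAlgebra _))
      (const_mem_subexponentialAlgebra _)
  case sum =>
    exact natCast_mem_subexponentialAlgebra_of_le 2
      ((m - 1 - i.val) + (m - 1 - j.val) + r + s + 1) fun τ => by linarith [hle τ i, hle τ j]

lemma jacobiValueAtOne_mem_subexponentialAlgebra (r s : ℕ) :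
    jacobiValueAtOne r s ∈ subexponentialAlgebra (multiIndexDegree (ι := Fin m)) := by
  refine mul_mem (jacobiVandermonde_mem_subexponentialAlgebra r s)
    (prod_mem_subexponentialAlgebra fun i _ => ?_)
  have hle (τ : Fin m → ℕ) : τ i ≤ ∑ j, τ j := single_le_sum_of_canonicallyOrdered (mem_univ i)
  generalize m - 1 - i.val = b
  have hratio := Gamma_natCast_div_mem_subexponentialAlgebra r
    (p := fun τ : Fin m → ℕ => τ i + b + r + 1) (q := fun τ => τ i + b + 1)
    (by simp) (by simp) (fun τ => by omega)
    (natCast_mem_subexponentialAlgebra_of_le 1 (b + r + 1) fun τ => by linarith [hle τ])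
  simp only [mul_assoc, mul_div_mul_comm]
  exact mul_mem hratio (const_mem_subexponentialAlgebra _)

lemma jacobiInvSqNorm_mem_subexponentialAlgebra (r s : ℕ) :
    jacobiInvSqNorm r s ∈ subexponentialAlgebra (multiIndexDegree (ι := Fin m)) := by
  refine prod_mem_subexponentialAlgebra fun i _ => ?_
  have hle (τ : Fin m → ℕ) : τ i ≤ ∑ j, τ j := single_le_sum_of_canonicallyOrdered (mem_univ i)
  generalize m - 1 - i.val = b
  have hlinear := natCast_mem_subexponentialAlgebra_of_le
    (p := fun τ : Fin m → ℕ => 2 * (τ i + b) + r + s + 1) 2 (2 * b + r + s + 1)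
    fun τ => by linarith [hle τ]
  have hratio_r := Gamma_natCast_div_mem_subexponentialAlgebra 0
    (p := fun τ : Fin m → ℕ => τ i + b + 1) (q := fun τ => r + τ i + b + 1)
    (by simp) (by simp) (fun τ => by omega)
    (natCast_mem_subexponentialAlgebra_of_le 1 (b + 1) fun τ => by linarith [hle τ])
  have hratio_s := Gamma_natCast_div_mem_subexponentialAlgebra r
    (p := fun τ : Fin m → ℕ => τ i + b + 1 + r + s) (q := fun τ => s + τ i + b + 1)
    (fun τ => by omega) (by simp) (fun τ => by omega)
    (natCast_mem_subexponentialAlgebra_of_le 1 (b + 1 + r + s) fun τ => by linarith [hle τ])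
  simp only [mul_assoc (Nat.cast _ : ℝ), mul_div_assoc (Nat.cast _ : ℝ), mul_div_mul_comm]
  exact mul_mem hlinear (mul_mem hratio_r hratio_s)

end Jacobi

theorem semigroup_density_abs_convergence_general (m r s : ℕ) (t d : ℝ) (ht : 0 < t) (hd : 0 < d) :
    Summable fun τ : Fin m → ℕ =>
      exp (-(jacobiEigenvalue r s τ : ℝ) * t / d) * jacobiValueAtOne r s τ ^ 2 *
        jacobiInvSqNorm r s τ := by
  have hc : 0 < t / d := div_pos ht hd
  have hsummable := summable_exp_neg_mul_of_mem_subexponentialAlgebra (half_lt_self hc)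
    (summable_exp_neg_mul_multiIndexDegree (half_pos hc))
    (fun τ => mul_le_mul_of_nonneg_left (multiIndexDegree_le_jacobiEigenvalue r s τ) hc.le)
    (mul_mem (pow_mem (jacobiValueAtOne_mem_subexponentialAlgebra (m := m) r s) 2)
      (jacobiInvSqNorm_mem_subexponentialAlgebra r s))
  refine hsummable.congr fun τ => ?_
  have hexponent : -(t / d * jacobiEigenvalue r s τ) = -(jacobiEigenvalue r s τ : ℝ) * t / d := by
    ring
  rw [Pi.mul_apply, Pi.pow_apply, hexponent, mul_assoc]

/-- Absolute convergence of the bilinear series defining the semi-group density of the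
eigenvalues of the Hermitian matrix Jacobi process: for integers `m ≥ 1`, `r ≥ s ≥ 0` and
reals `t, d > 0`, the family `τ ↦ exp(-K_τ t/d) · Q_τ² · N_τ`, indexed by the partitions `τ`
with at most `m` parts, is summable.  Here, with indices `i, j : Fin m` standing for
`i + 1, j + 1 ∈ {1, …, m}` (so `m - i` reads `m - 1 - i.val`):
* `K_τ = ∑_i τ_i (τ_i + r + s + 1 + 2(m - i))`,
* `Q_τ = ∏_{i<j} (τ_i - τ_j + j - i)(τ_i + τ_j + 2m - i - j + r + s + 1)
    · ∏_i Γ(τ_i + m - i + r + 1) 2^{-(m-i)} / (Γ(τ_i + m - i + 1) Γ(m - i + r + 1) Γ(m - i + 1))`,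
* `N_τ = ∏_i (2(τ_i + m - i) + r + s + 1) Γ(τ_i + m - i + 1) Γ(τ_i + m - i + 1 + r + s)
    / (Γ(r + τ_i + m - i + 1) Γ(s + τ_i + m - i + 1))`. -/
theorem semigroup_density_abs_convergence (m r s : ℕ) (hm : 1 ≤ m) (hsr : s ≤ r)
    (t d : ℝ) (ht : 0 < t) (hd : 0 < d) :
    Summable (fun τ : {f : Fin m → ℕ // Antitone f} =>
      Real.exp (-((∑ i : Fin m,
            (τ.1 i * (τ.1 i + r + s + 1 + 2 * (m - 1 - i.val)) : ℕ) : ℕ) : ℝ) * t / d) *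
        ((∏ i : Fin m, ∏ j ∈ Finset.Ioi i,
            (((τ.1 i : ℝ) - (τ.1 j : ℝ) + (j.val : ℝ) - (i.val : ℝ)) *
              ((τ.1 i + τ.1 j + (m - 1 - i.val) + (m - 1 - j.val) + r + s + 1 : ℕ) : ℝ))) *
          ∏ i : Fin m,
            Real.Gamma ((τ.1 i + (m - 1 - i.val) + r + 1 : ℕ)) *
              ((2 : ℝ) ^ (m - 1 - i.val))⁻¹ /
              (Real.Gamma ((τ.1 i + (m - 1 - i.val) + 1 : ℕ)) *
                Real.Gamma (((m - 1 - i.val) + r + 1 : ℕ)) *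
                Real.Gamma (((m - 1 - i.val) + 1 : ℕ)))) ^ 2 *
        ∏ i : Fin m,
          ((2 * (τ.1 i + (m - 1 - i.val)) + r + s + 1 : ℕ) : ℝ) *
            Real.Gamma ((τ.1 i + (m - 1 - i.val) + 1 : ℕ)) *
            Real.Gamma ((τ.1 i + (m - 1 - i.val) + 1 + r + s : ℕ)) /
            (Real.Gamma ((r + τ.1 i + (m - 1 - i.val) + 1 : ℕ)) *
              Real.Gamma ((s + τ.1 i + (m - 1 - i.val) + 1 : ℕ)))) :=
  (semigroup_density_abs_convergence_general m r s t d ht hd).comp_injective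
    Subtype.val_injective
end

section
/- Let a ≥ 1 and b ≥ 0 be integers. Then for every real number x, 1 + ∑_{c=1}^a ∑_{e=0}^b binom((a,1^b),(c,1^e)) · x^{c+e} = (1+x)^{a+b}. -/
/-- The generalized binomial coefficient `binom(τ, μ)` for the hooks `τ = (a, 1^b)` and
`μ = (c, 1^e)` with `1 ≤ c ≤ a`, `0 ≤ e ≤ b`:
`binom(τ,μ) = C(a-1, a-c) · C(b, b-e) · [(a+e)(b+c) - (a-c)(b-e)] / (c+e)²`. -/
noncomputable def hookBinom (a b c e : ℕ) : ℝ :=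
  (Nat.choose (a - 1) (a - c) : ℝ) * (Nat.choose b (b - e) : ℝ) *
    (((a : ℝ) + e) * ((b : ℝ) + c) - ((a : ℝ) - c) * ((b : ℝ) - e)) / ((c : ℝ) + e) ^ 2

/-! The bracket in `hookBinom` factors as `(a + b) (c + e)`, so that with `n = a + b - 1`
`binom((a, 1^b), (c, 1^e)) = C(a - 1, c - 1) C(b, e) (n + 1) / (c + e)`. On the hooks of fixed
weight `s + 1` the last factor is constant, and Vandermonde's identity sums the others to `C(n, s)`.
Absorption turns `C(n, s) (n + 1) / (s + 1)` into `C(n + 1, s + 1)`, the coefficient of `x^(s + 1)`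
in `(1 + x)^(n + 1)`. -/

open Finset

theorem sum_filter_add_eq_choose_mul_choose (m n s : ℕ) :
    ∑ p ∈ range (m + 1) ×ˢ range (n + 1) with p.1 + p.2 = s, m.choose p.1 * n.choose p.2 =
      (m + n).choose s := by
  rw [Nat.add_choose_eq]
  refine sum_subset (fun p hp ↦ HasAntidiagonal.mem_antidiagonal.2 (mem_filter.1 hp).2)
    fun p hp hp_notMem ↦ ?_
  have lt_fst_or_lt_snd : m < p.1 ∨ n < p.2 := by
    simp only [HasAntidiagonal.mem_antidiagonal, mem_filter, mem_product, mem_range]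
      at hp hp_notMem
    lia
  rcases lt_fst_or_lt_snd with h | h <;> simp [Nat.choose_eq_zero_of_lt h]

theorem sum_range_choose_mul_choose_nsmul {M : Type*} [AddCommMonoid M] (m n : ℕ) (f : ℕ → M) :
    ∑ i ∈ range (m + 1), ∑ j ∈ range (n + 1), (m.choose i * n.choose j) • f (i + j) =
      ∑ s ∈ range (m + n + 1), (m + n).choose s • f s := by
  have add_mem_range : ∀ p ∈ range (m + 1) ×ˢ range (n + 1), p.1 + p.2 ∈ range (m + n + 1) := by
    simp only [mem_product, mem_range]
    lia
  rw [← sum_product', ← sum_fiberwise_of_maps_to add_mem_range]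
  refine sum_congr rfl fun s _ ↦ ?_
  rw [← sum_filter_add_eq_choose_mul_choose, ← sum_nsmul_assoc]
  exact sum_congr rfl fun p hp ↦ by rw [(mem_filter.1 hp).2]

theorem choose_mul_add_one_div_add_one {K : Type*} [DivisionSemiring K] [CharZero K] (n k : ℕ) :
    (n.choose k : K) * ((n + 1) / (k + 1)) = (n + 1).choose (k + 1) := by
  rw [mul_div_assoc', div_eq_iff (Nat.cast_add_one_ne_zero k)]
  exact_mod_cast (mul_comm _ _).trans (Nat.add_one_mul_choose_eq n k)

theorem one_add_pow_eq_one_add_sum {R : Type*} [Semiring R] (x : R) (n : ℕ) :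
    (1 + x) ^ n = 1 + ∑ s ∈ range n, n.choose (s + 1) • x ^ (s + 1) := by
  rw [add_comm 1 x, (Commute.one_right x).add_pow, sum_range_succ', add_comm]
  simp [nsmul_eq_mul, Nat.cast_comm]

theorem hookBinom_add_one_add_one {m b i j : ℕ} (hi : i ≤ m) (hj : j ≤ b) :
    hookBinom (m + 1) b (i + 1) j =
      (m.choose i * b.choose j : ℕ) * (((m + b : ℕ) + 1) / ((i + j : ℕ) + 1)) := by
  have bracket_eq (a b c e : ℝ) :
      (a + e) * (b + c) - (a - c) * (b - e) = (a + b) * (c + e) := by ring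
  rw [hookBinom, bracket_eq, Nat.add_sub_cancel, Nat.add_sub_add_right, Nat.choose_symm hi,
    Nat.choose_symm hj]
  push_cast
  field_simp
  ring

theorem hook_binomial_formula_general {A : Type*} [Semiring A] [Algebra ℝ A] (a b : ℕ)
    (ha : 1 ≤ a) (x : A) :
    1 + ∑ c ∈ Icc 1 a, ∑ e ∈ range (b + 1), hookBinom a b c e • x ^ (c + e) =
      (1 + x) ^ (a + b) := by
  obtain ⟨m, rfl⟩ := Nat.exists_eq_add_of_le' ha
  let f (s : ℕ) : A := (((m + b : ℕ) + 1) / (s + 1) : ℝ) • x ^ (s + 1)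
  have hookBinom_smul {i j : ℕ} (hi : i ∈ range (m + 1)) (hj : j ∈ range (b + 1)) :
      hookBinom (m + 1) b (i + 1) j • x ^ (i + 1 + j) =
        (m.choose i * b.choose j) • f (i + j) := by
    rw [hookBinom_add_one_add_one (mem_range_succ_iff.1 hi) (mem_range_succ_iff.1 hj), mul_smul,
      Nat.cast_smul_eq_nsmul, add_right_comm i 1 j]
  have choose_nsmul (s : ℕ) :
      (m + b).choose s • f s = (m + b + 1).choose (s + 1) • x ^ (s + 1) := by
    rw [← Nat.cast_smul_eq_nsmul ℝ, smul_smul, choose_mul_add_one_div_add_one,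
      Nat.cast_smul_eq_nsmul]
  calc
    _ = 1 + ∑ i ∈ range (m + 1), ∑ j ∈ range (b + 1),
          hookBinom (m + 1) b (i + 1) j • x ^ (i + 1 + j) := by
      rw [← Ico_add_one_right_eq_Icc, sum_Ico_eq_sum_range]
      simp only [Nat.add_sub_cancel, Nat.add_comm 1]
    _ = 1 + ∑ i ∈ range (m + 1), ∑ j ∈ range (b + 1),
          (m.choose i * b.choose j) • f (i + j) := by
      congr 1
      exact sum_congr rfl fun i hi ↦ sum_congr rfl fun j hj ↦ hookBinom_smul hi hj
    _ = 1 + ∑ s ∈ range (m + b + 1), (m + b + 1).choose (s + 1) • x ^ (s + 1) := by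
      simp only [sum_range_choose_mul_choose_nsmul, choose_nsmul]
    _ = (1 + x) ^ (m + 1 + b) := by
      rw [← one_add_pow_eq_one_add_sum, add_right_comm]

/-- Specialization at equal variables of the generalized binomial formula for Schur functions,
for a hook `τ = (a, 1^b)` with `a ≥ 1`, `b ≥ 0`:
`1 + ∑_{c=1}^a ∑_{e=0}^b binom((a,1^b), (c,1^e)) x^{c+e} = (1+x)^{a+b}` for all real `x`
(the summand indexed by `(c, e)` corresponds to the hook `μ = (c, 1^e) ⊆ τ` of weight
`|μ| = c + e`, the term `1` to the empty partition). -/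
theorem hook_binomial_formula (a b : ℕ) (ha : 1 ≤ a) (x : ℝ) :
    1 + ∑ c ∈ Finset.Icc 1 a, ∑ e ∈ Finset.range (b + 1),
        hookBinom a b c e * x ^ (c + e)
      = (1 + x) ^ (a + b) := by
  simpa only [smul_eq_mul] using hook_binomial_formula_general a b ha x
end
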